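/- There exist nonconstant polynomials f, g, h ∈ ℂ[X] satisfying f^3 + g^3 + h^3 = 1. -/

import Mathlib

open Polynomial

/-- With `f = 9a⁴` and `g = 3ab³ - f`, the term `f³` cancels, leaving
`f³ + g³ = (3ab³)³ - 3(3ab³)²f + 3(3ab³)f²`, which is the difference of cubes
`(b⁴)³ - (b⁴ - 9a³b)³`. -/
theorem mahler_sum_three_cubes_eq_pow_twelve {R : Type*} [CommRing R] (a b : R) :
    (9 * a ^ 4) ^ 3 + (3 * a * b ^ 3 - 9 * a ^ 4) ^ 3 + (b ^ 4 - 9 * a ^ 3 * b) ^ 3 = b ^ 12 := by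
  ring

theorem stmt_16_general {R : Type*} [CommRing R] (h9 : (9 : R) ≠ 0) :
    ∃ f g h : R[X], 0 < f.degree ∧ 0 < g.degree ∧ 0 < h.degree ∧
      f ^ 3 + g ^ 3 + h ^ 3 = 1 := by
  have : Nontrivial R := nontrivial_of_ne 9 0 h9
  have degree_f : (9 * X ^ 4 : R[X]).degree = 4 := by compute_degree!
  have degree_g : (3 * X - 9 * X ^ 4 : R[X]).degree = 4 := by compute_degree!
  have degree_h : (1 - 9 * X ^ 3 : R[X]).degree = 3 := by compute_degree!
  refine ⟨9 * X ^ 4, 3 * X - 9 * X ^ 4, 1 - 9 * X ^ 3, ?_, ?_, ?_, ?_⟩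
  · simp [degree_f]
  · simp [degree_g]
  · simp [degree_h]
  · simpa using mahler_sum_three_cubes_eq_pow_twelve (X : R[X]) 1

theorem stmt_16 :
    ∃ f g h : Polynomial ℂ, 0 < f.degree ∧ 0 < g.degree ∧ 0 < h.degree ∧
      f ^ 3 + g ^ 3 + h ^ 3 = 1 :=
  stmt_16_general (by norm_num)
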